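/- Continuity of the FAAL value in the constraint parameter at zero from the right combined with its bounds: for any C ≥ 1 and loss vector ℓ ∈ ℝ^C, the function τ ↦ L_FAAL(ℓ, τ) satisfies L_FAAL(ℓ, τ) → (1/C)·Σ_c ℓ_c as τ → 0⁺; quantitatively, 0 ≤ L_FAAL(ℓ, τ) − (1/C)·Σ_c ℓ_c ≤ (max_c ℓ_c − min_c ℓ_c)·√(τ/2), using that any feasible w satisfies the total-variation bound (1/2)·Σ_c |w_c − 1/C| ≤ √(τ/2). -/

import Mathlib

/-!
Pinsker's inequality comes from the one-variable bound `3 (x - 1)² ≤ (2 x + 4) (x log x + 1 - x)`,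
which holds because the right side minus the left is convex, and vanishes with its derivative at 1.
At `x = p c / q c` it becomes, after multiplication by `(q c)²`, a bound on `(p c - q c)²` by a
product of two factors; the first sums to `6` and the second to `KL p q`, so Cauchy–Schwarz gives
`3 (∑ |q c - p c|)² ≤ 6 KL p q`.

Subtracting the midpoint `(M + m) / 2` of the range of `ℓ`, which does not affect
`∑ (q c - p c) ℓ c`, turns this bound on total variation into one on the difference of the two
expected losses. As `τ → 0⁺` the values of the objective are squeezed against its value at the
uniform distribution.
-/

open Real Finset

/-- The probability simplex `Δ_C` in `ℝ^C`. -/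
def simplex (C : ℕ) : Set (Fin C → ℝ) :=
  {w | (∀ c, 0 ≤ w c) ∧ ∑ c, w c = 1}

/-- The uniform distribution `U` on `C` classes. -/
noncomputable def uniform (C : ℕ) : Fin C → ℝ := fun _ => 1 / C

/-- Kullback–Leibler divergence `KL(p‖q)` with the conventions `0·log(0/q) = 0`
(automatic since `0 * x = 0`) and `KL(p‖q) = ⊤` when `p c > 0` but `q c = 0`. -/
noncomputable def KL {C : ℕ} (p q : Fin C → ℝ) : EReal :=
  if ∀ c, 0 < p c → 0 < q c
  then ((∑ c, p c * Real.log (p c / q c) : ℝ) : EReal)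
  else ⊤

/-- The FAAL objective `L_FAAL(ℓ, τ) = sup { Σ_c w_c ℓ_c : w ∈ Δ_C, KL(U‖w) ≤ τ }`. -/
noncomputable def faal (C : ℕ) (ℓ : Fin C → ℝ) (τ : ℝ) : ℝ :=
  sSup {s | ∃ w ∈ simplex C, KL (uniform C) w ≤ (τ : EReal) ∧ s = ∑ c, w c * ℓ c}

section Pinsker

open InformationTheory

/-- The function `x ↦ (2 x + 4) (x log x + 1 - x) - 3 (x - 1)²`, whose nonnegativity on `[0, ∞)` is
the pointwise form of Pinsker's inequality. -/
noncomputable def pinskerSlack (x : ℝ) : ℝ := (2 * x + 4) * klFun x - 3 * (x - 1) ^ 2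

lemma continuous_pinskerSlack : Continuous pinskerSlack := by
  unfold pinskerSlack
  fun_prop

lemma hasDerivAt_pinskerSlack {x : ℝ} (hx : x ≠ 0) :
    HasDerivAt pinskerSlack (4 * (x + 1) * log x - 8 * (x - 1)) x := by
  have h_left : HasDerivAt (fun x : ℝ ↦ 2 * x + 4) 2 x := by
    simpa using ((hasDerivAt_id x).const_mul 2).add_const 4
  have h_sq : HasDerivAt (fun x : ℝ ↦ 3 * (x - 1) ^ 2) (6 * (x - 1)) x :=
    ((((hasDerivAt_id x).sub_const 1).pow 2).const_mul 3).congr_deriv (by simp; ring)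
  refine ((h_left.mul (hasDerivAt_klFun hx)).sub h_sq).congr_deriv ?_
  rw [klFun_apply]
  ring

lemma convexOn_pinskerSlack : ConvexOn ℝ (Set.Ici 0) pinskerSlack := by
  refine convexOn_of_hasDerivWithinAt2_nonneg (convex_Ici 0) continuous_pinskerSlack.continuousOn
    (f' := fun x ↦ 4 * (x + 1) * log x - 8 * (x - 1))
    (f'' := fun x ↦ 4 * (log x - (1 - x⁻¹))) ?_ ?_ ?_ <;>
    rw [interior_Ici] <;> intro x (hx : 0 < x)
  · exact (hasDerivAt_pinskerSlack hx.ne').hasDerivWithinAt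
  · have h_left : HasDerivAt (fun x : ℝ ↦ 4 * (x + 1)) 4 x := by
      simpa using ((hasDerivAt_id x).add_const 1).const_mul 4
    have h_right : HasDerivAt (fun x : ℝ ↦ 8 * (x - 1)) 8 x := by
      simpa using ((hasDerivAt_id x).sub_const 1).const_mul 8
    refine (((h_left.mul (hasDerivAt_log hx.ne')).sub h_right).congr_deriv ?_).hasDerivWithinAt
    field_simp
    ring
  · have := one_sub_inv_le_log_of_pos hx
    linarith

lemma three_mul_sub_one_sq_le_mul_klFun {x : ℝ} (hx : 0 ≤ x) :
    3 * (x - 1) ^ 2 ≤ (2 * x + 4) * klFun x := by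
  have h_deriv : HasDerivAt pinskerSlack 0 1 := by
    simpa using hasDerivAt_pinskerSlack one_ne_zero
  have h_min : IsMinOn pinskerSlack (Set.Ici 0) 1 :=
    convexOn_pinskerSlack.isMinOn_of_rightDeriv_eq_zero (by simp)
      (h_deriv.hasDerivWithinAt.derivWithin (uniqueDiffWithinAt_Ioi 1))
  have h_one : pinskerSlack 1 = 0 := by simp [pinskerSlack, klFun_one]
  have h_nonneg : 0 ≤ pinskerSlack x := h_one ▸ h_min hx
  exact sub_nonneg.1 h_nonneg

lemma mul_klFun_div {q : ℝ} (hq : q ≠ 0) (p : ℝ) :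
    q * klFun (p / q) = p * log (p / q) + q - p := by
  rw [klFun_apply]
  field_simp

lemma mul_log_div_add_sub_nonneg {p q : ℝ} (hp : 0 ≤ p) (hq : 0 ≤ q) (hpq : 0 < p → 0 < q) :
    0 ≤ p * log (p / q) + q - p := by
  rcases hp.eq_or_lt with rfl | hp
  · simpa
  · rw [← mul_klFun_div (hpq hp).ne']
    exact mul_nonneg hq (klFun_nonneg (by positivity))

lemma three_mul_sub_sq_le_mul_log_div {p q : ℝ} (hp : 0 ≤ p) (hpq : 0 < p → 0 < q) :
    3 * (q - p) ^ 2 ≤ (2 * p + 4 * q) * (p * log (p / q) + q - p) := by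
  rcases hp.eq_or_lt with rfl | hp
  · simp only [zero_mul, mul_zero]
    nlinarith [sq_nonneg q]
  · have hq' : 0 < q := hpq hp
    have h := three_mul_sub_one_sq_le_mul_klFun (x := p / q) (by positivity)
    calc 3 * (q - p) ^ 2 = q ^ 2 * (3 * (p / q - 1) ^ 2) := by field_simp; ring
      _ ≤ q ^ 2 * ((2 * (p / q) + 4) * klFun (p / q)) := by gcongr
      _ = (2 * p + 4 * q) * (q * klFun (p / q)) := by field_simp
      _ = (2 * p + 4 * q) * (p * log (p / q) + q - p) := by rw [mul_klFun_div hq'.ne']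

lemma three_mul_sum_abs_sub_sq_le {ι : Type*} {s : Finset ι} {p q : ι → ℝ}
    (hp : ∀ i ∈ s, 0 ≤ p i) (hq : ∀ i ∈ s, 0 ≤ q i) (hpq : ∀ i ∈ s, 0 < p i → 0 < q i) :
    3 * (∑ i ∈ s, |q i - p i|) ^ 2 ≤ (2 * ∑ i ∈ s, p i + 4 * ∑ i ∈ s, q i) *
      (∑ i ∈ s, p i * log (p i / q i) + ∑ i ∈ s, q i - ∑ i ∈ s, p i) := by
  have h_cauchy : (∑ i ∈ s, |q i - p i|) ^ 2 ≤ (∑ i ∈ s, (2 * p i + 4 * q i) / 3) *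
      ∑ i ∈ s, (p i * log (p i / q i) + q i - p i) := by
    refine sum_sq_le_sum_mul_sum_of_sq_le_mul s (fun i hi ↦ ?_) (fun i hi ↦ ?_) fun i hi ↦ ?_
    · linarith [hp i hi, hq i hi]
    · exact mul_log_div_add_sub_nonneg (hp i hi) (hq i hi) (hpq i hi)
    · rw [sq_abs]
      linarith [three_mul_sub_sq_le_mul_log_div (hp i hi) (hpq i hi)]
  rw [← sum_div, sum_add_distrib, ← mul_sum, ← mul_sum, sum_sub_distrib, sum_add_distrib]
    at h_cauchy
  linarith

end Pinsker

lemma sum_mul_sub_sum_mul_le_of_mem_Icc {ι : Type*} {s : Finset ι} {p q ℓ : ι → ℝ} {m M : ℝ}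
    (hpq : ∑ i ∈ s, p i = ∑ i ∈ s, q i) (hℓ : ∀ i ∈ s, ℓ i ∈ Set.Icc m M) :
    ∑ i ∈ s, q i * ℓ i - ∑ i ∈ s, p i * ℓ i ≤ (M - m) * ((1 / 2) * ∑ i ∈ s, |q i - p i|) := by
  have h_center : ∑ i ∈ s, (q i - p i) * ((M + m) / 2) = 0 := by
    rw [← sum_mul, sum_sub_distrib, hpq, sub_self, zero_mul]
  have h_dist (i : ι) (hi : i ∈ s) : |ℓ i - (M + m) / 2| ≤ (M - m) / 2 := by
    rw [abs_le]
    constructor <;> linarith [(hℓ i hi).1, (hℓ i hi).2]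
  calc ∑ i ∈ s, q i * ℓ i - ∑ i ∈ s, p i * ℓ i
      = ∑ i ∈ s, (q i - p i) * (ℓ i - (M + m) / 2) := by
        simp only [mul_sub _ (ℓ _), sum_sub_distrib, h_center, sub_mul _ _ (ℓ _), sub_zero]
    _ ≤ ∑ i ∈ s, |q i - p i| * ((M - m) / 2) := by
        refine sum_le_sum fun i hi ↦ (le_abs_self _).trans ?_
        rw [abs_mul]
        exact mul_le_mul_of_nonneg_left (h_dist i hi) (abs_nonneg _)
    _ = (M - m) * ((1 / 2) * ∑ i ∈ s, |q i - p i|) := by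
        rw [← sum_mul]
        ring

section Simplex

variable {C : ℕ} {p q ℓ : Fin C → ℝ} {m M τ : ℝ}

lemma KL_le_coe_iff :
    KL p q ≤ (τ : EReal) ↔
      (∀ c, 0 < p c → 0 < q c) ∧ ∑ c, p c * log (p c / q c) ≤ τ := by
  unfold KL
  split_ifs with h
  · rw [EReal.coe_le_coe_iff, and_iff_right h]
  · simp [h]

lemma KL_self_le_coe (p : Fin C → ℝ) (hτ : 0 ≤ τ) : KL p p ≤ (τ : EReal) := by
  have h_term (c : Fin C) : p c * log (p c / p c) = 0 := by
    rcases eq_or_ne (p c) 0 with h | h <;> simp [h]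
  exact KL_le_coe_iff.2 ⟨fun _ ↦ id, by simpa only [h_term, sum_const_zero]⟩

theorem half_sum_abs_sub_le_sqrt_of_KL_le (hp : p ∈ simplex C) (hq : q ∈ simplex C)
    (hKL : KL p q ≤ (τ : EReal)) :
    (1 / 2) * ∑ c, |q c - p c| ≤ √(τ / 2) := by
  obtain ⟨hpq, hτ⟩ := KL_le_coe_iff.1 hKL
  have h := three_mul_sum_abs_sub_sq_le (s := univ) (fun c _ ↦ hp.1 c) (fun c _ ↦ hq.1 c)
    fun c _ ↦ hpq c
  rw [hp.2, hq.2] at h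
  apply le_sqrt_of_sq_le
  linarith

lemma sum_mul_sub_sum_mul_le_of_KL_le (hp : p ∈ simplex C) (hq : q ∈ simplex C)
    (hKL : KL p q ≤ (τ : EReal)) (hℓ : ∀ c, ℓ c ∈ Set.Icc m M) :
    ∑ c, q c * ℓ c - ∑ c, p c * ℓ c ≤ (M - m) * √(τ / 2) := by
  have hmM : 0 ≤ M - m := by
    obtain ⟨c, -, -⟩ := exists_ne_zero_of_sum_ne_zero (hp.2.trans_ne one_ne_zero)
    exact sub_nonneg.2 ((hℓ c).1.trans (hℓ c).2)
  calc ∑ c, q c * ℓ c - ∑ c, p c * ℓ c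
      ≤ (M - m) * ((1 / 2) * ∑ c, |q c - p c|) :=
        sum_mul_sub_sum_mul_le_of_mem_Icc (hp.2.trans hq.2.symm) fun c _ ↦ hℓ c
    _ ≤ (M - m) * √(τ / 2) :=
        mul_le_mul_of_nonneg_left (half_sum_abs_sub_le_sqrt_of_KL_le hp hq hKL) hmM

lemma uniform_mem_simplex (hC : 1 ≤ C) : uniform C ∈ simplex C := by
  have hC' : (C : ℝ) ≠ 0 := by positivity
  exact ⟨fun c ↦ by unfold uniform; positivity, by simp [uniform, hC']⟩

lemma sum_uniform_mul (ℓ : Fin C → ℝ) : ∑ c, uniform C c * ℓ c = (1 / C) * ∑ c, ℓ c := by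
  simp only [uniform, mul_sum]

end Simplex

section Faal

variable {C : ℕ} {ℓ : Fin C → ℝ} {m M τ : ℝ}

/-- The expected losses `∑ c, w c * ℓ c` of the weights `w` that are feasible for the FAAL problem;
`faal C ℓ τ` is their supremum. -/
def feasibleLosses (C : ℕ) (ℓ : Fin C → ℝ) (τ : ℝ) : Set ℝ :=
  {s | ∃ w ∈ simplex C, KL (uniform C) w ≤ (τ : EReal) ∧ s = ∑ c, w c * ℓ c}

lemma mean_mem_feasibleLosses (hC : 1 ≤ C) (ℓ : Fin C → ℝ) (hτ : 0 ≤ τ) :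
    (1 / C) * ∑ c, ℓ c ∈ feasibleLosses C ℓ τ :=
  ⟨uniform C, uniform_mem_simplex hC, KL_self_le_coe _ hτ, (sum_uniform_mul ℓ).symm⟩

lemma mem_upperBounds_feasibleLosses (hC : 1 ≤ C) (τ : ℝ) (hℓ : ∀ c, ℓ c ∈ Set.Icc m M) :
    (1 / C) * ∑ c, ℓ c + (M - m) * √(τ / 2) ∈ upperBounds (feasibleLosses C ℓ τ) := by
  rintro _ ⟨w, hw, hKL, rfl⟩
  rw [← sum_uniform_mul, ← sub_le_iff_le_add']
  exact sum_mul_sub_sum_mul_le_of_KL_le (uniform_mem_simplex hC) hw hKL hℓ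

lemma mean_le_faal (hC : 1 ≤ C) (ℓ : Fin C → ℝ) (hτ : 0 ≤ τ) :
    (1 / C) * ∑ c, ℓ c ≤ faal C ℓ τ := by
  obtain ⟨M, hM⟩ := (Set.finite_range ℓ).bddAbove
  obtain ⟨m, hm⟩ := (Set.finite_range ℓ).bddBelow
  have hℓ (c : Fin C) : ℓ c ∈ Set.Icc m M := ⟨hm ⟨c, rfl⟩, hM ⟨c, rfl⟩⟩
  exact le_csSup ⟨_, mem_upperBounds_feasibleLosses hC τ hℓ⟩ (mean_mem_feasibleLosses hC ℓ hτ)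

lemma faal_le_mean_add (hC : 1 ≤ C) (hτ : 0 ≤ τ) (hℓ : ∀ c, ℓ c ∈ Set.Icc m M) :
    faal C ℓ τ ≤ (1 / C) * ∑ c, ℓ c + (M - m) * √(τ / 2) :=
  csSup_le ⟨_, mean_mem_feasibleLosses hC ℓ hτ⟩ (mem_upperBounds_feasibleLosses hC τ hℓ)

end Faal

open Filter Topology in
lemma tendsto_nhdsGT_zero_of_le_add_mul_sqrt {f : ℝ → ℝ} {a K : ℝ} (h_lower : ∀ τ, 0 < τ → a ≤ f τ)
    (h_upper : ∀ τ, 0 < τ → f τ ≤ a + K * √(τ / 2)) : Tendsto f (𝓝[>] 0) (𝓝 a) := by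
  have h_cont : Continuous fun τ : ℝ ↦ a + K * √(τ / 2) := by fun_prop
  have h_bound : Tendsto (fun τ : ℝ ↦ a + K * √(τ / 2)) (𝓝[>] 0) (𝓝 a) :=
    tendsto_nhdsWithin_of_tendsto_nhds (by simpa using h_cont.tendsto 0)
  exact tendsto_of_tendsto_of_tendsto_of_le_of_le' tendsto_const_nhds h_bound
    (eventually_nhdsWithin_of_forall h_lower) (eventually_nhdsWithin_of_forall h_upper)

/-- right-continuity of the FAAL value at `τ = 0` with
quantitative bounds: `L_FAAL(ℓ, τ) → (1/C)·Σ_c ℓ_c` as `τ → 0⁺`, with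
`0 ≤ L_FAAL(ℓ, τ) − (1/C)·Σ_c ℓ_c ≤ (max_c ℓ_c − min_c ℓ_c)·√(τ/2)`, using
Pinsker's total-variation bound `(1/2)·Σ_c |w_c − 1/C| ≤ √(τ/2)` for any
feasible `w`. -/
theorem faal_right_continuous_at_zero (C : ℕ) (hC : 1 ≤ C) (ℓ : Fin C → ℝ) :
    (∀ w ∈ simplex C, ∀ τ : ℝ, 0 ≤ τ → KL (uniform C) w ≤ (τ : EReal) →
      (1 / 2) * ∑ c, |w c - 1 / (C : ℝ)| ≤ Real.sqrt (τ / 2)) ∧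
    (∀ τ : ℝ, 0 ≤ τ →
      0 ≤ faal C ℓ τ - (1 / C) * ∑ c, ℓ c ∧
      faal C ℓ τ - (1 / C) * ∑ c, ℓ c ≤
        (Finset.univ.sup' ⟨⟨0, hC⟩, Finset.mem_univ _⟩ ℓ -
          Finset.univ.inf' ⟨⟨0, hC⟩, Finset.mem_univ _⟩ ℓ) * Real.sqrt (τ / 2)) ∧
    Filter.Tendsto (fun τ : ℝ => faal C ℓ τ) (nhdsWithin 0 (Set.Ioi 0))
      (nhds ((1 / C) * ∑ c, ℓ c)) := by
  have hℓ (c : Fin C) : ℓ c ∈ Set.Icc (univ.inf' ⟨⟨0, hC⟩, mem_univ _⟩ ℓ)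
      (univ.sup' ⟨⟨0, hC⟩, mem_univ _⟩ ℓ) :=
    ⟨inf'_le ℓ (mem_univ c), le_sup' ℓ (mem_univ c)⟩
  refine ⟨fun w hw τ _ hKL ↦ ?_, fun τ hτ ↦ ⟨?_, ?_⟩, ?_⟩
  · exact half_sum_abs_sub_le_sqrt_of_KL_le (uniform_mem_simplex hC) hw hKL
  · exact sub_nonneg.2 (mean_le_faal hC ℓ hτ)
  · exact sub_le_iff_le_add'.2 (faal_le_mean_add hC hτ hℓ)
  · exact tendsto_nhdsGT_zero_of_le_add_mul_sqrt (fun τ hτ ↦ mean_le_faal hC ℓ hτ.le)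
      fun τ hτ ↦ faal_le_mean_add hC hτ.le hℓ
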